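/- arXiv:1710.06093 — 3 statements merged into one kernel-verified Lean document; each statement's English description precedes it below -/
import Mathlib

section
/- The group Γ is nilpotent if and only if Γ is abelian. -/
/-- The set of relators of the group `Γ` (on generators `α_0, …, α_{k-1}`, 0-indexed) from the
presentation of the fundamental group of a generalized real Bott manifold.  Here `l` plays the
role of the number of blocks of size at least two, and `a p q` is the entry `a_{p,1}^q`.
(Indices are 0-based: the paper's generator `α_j` corresponds to index `j - 1`.) -/
def gbmRels (k l : ℕ) (a : Fin k → Fin k → ZMod 2) : Set (FreeGroup (Fin k)) :=
  {r | (∃ p : Fin k, (p : ℕ) < l ∧ r = (FreeGroup.of p) ^ 2) ∨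
       (∃ p q : Fin k, p < q ∧ (q : ℕ) < l ∧ r = (FreeGroup.of p * FreeGroup.of q) ^ 2) ∨
       (∃ p q : Fin k, p < q ∧ l ≤ (p : ℕ) ∧
         r = (if a p q = 0 then
                FreeGroup.of p * FreeGroup.of q * (FreeGroup.of p)⁻¹ * (FreeGroup.of q)⁻¹
              else
                FreeGroup.of p * (FreeGroup.of q)⁻¹ * (FreeGroup.of p)⁻¹ * (FreeGroup.of q)⁻¹)) ∨
       (∃ p q : Fin k, p < q ∧ (p : ℕ) < l ∧ l ≤ (q : ℕ) ∧
         r = (if a p q = 0 then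
                FreeGroup.of p * FreeGroup.of q * FreeGroup.of p * (FreeGroup.of q)⁻¹
              else
                (FreeGroup.of p * FreeGroup.of q) ^ 2))}

/-!
For `q ≥ l`, sending `α_q` to a translation, each earlier `α_p` to a reflection or to `1` according
to whether or not it inverts `α_q`, and each later generator to `1`, respects the relations and
defines a homomorphism from `Γ` to the infinite dihedral group. If some `α_p` inverts `α_q`, this
homomorphism is surjective, and `Γ` cannot be nilpotent because the infinite dihedral group has
trivial center. Otherwise every conjugation relation says that two generators commute.
-/

section Words

variable {G : Type*} [Group G] {x y : G}

theorem inv_eq_self_of_sq_eq_one (hx : x ^ 2 = 1) : x⁻¹ = x :=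
  inv_eq_of_mul_eq_one_left (by rwa [← sq])

theorem mul_sq_eq_one_iff_commute (hx : x ^ 2 = 1) (hy : y ^ 2 = 1) :
    (x * y) ^ 2 = 1 ↔ Commute x y := by
  rw [sq, mul_eq_one_iff_eq_inv, mul_inv_rev, inv_eq_self_of_sq_eq_one hx,
    inv_eq_self_of_sq_eq_one hy, commute_iff_eq]

theorem ite_commutator_eq_one_iff {c : Prop} [Decidable c] :
    (if c then x * y * x⁻¹ * y⁻¹ else x * y⁻¹ * x⁻¹ * y⁻¹) = 1 ↔
      x * y * x⁻¹ = if c then y else y⁻¹ := by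
  split_ifs
  · exact mul_inv_eq_one
  · rw [mul_inv_eq_one, ← conj_inv, inv_eq_iff_eq_inv]

theorem ite_mul_sq_eq_one_iff {c : Prop} [Decidable c] (hx : x ^ 2 = 1) :
    (if c then x * y * x * y⁻¹ else (x * y) ^ 2) = 1 ↔
      x * y * x⁻¹ = if c then y else y⁻¹ := by
  rw [inv_eq_self_of_sq_eq_one hx]
  split_ifs
  · exact mul_inv_eq_one
  · rw [sq, ← mul_assoc, mul_eq_one_iff_eq_inv]

end Words

theorem isMulCommutative_of_closure_eq_top {G : Type*} [Group G] {s : Set G}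
    (hs : Subgroup.closure s = ⊤) (hcomm : ∀ x ∈ s, ∀ y ∈ s, x * y = y * x) :
    IsMulCommutative G := by
  have := Subgroup.isMulCommutative_closure hcomm
  rw [hs] at this
  exact .of_comm fun x y => setLike_mul_comm (Subgroup.mem_top x) (Subgroup.mem_top y)

/-- The relations of `Γ` for a family `f` in an arbitrary group, in a uniform shape: `f p` with
`p < l` squares to `1`, the `f p` with `p < l` commute with one another, and for `p < q` with
`l ≤ q` the element `f p` conjugates `f q` to `f q` or to its inverse, depending on `a p q`. -/
structure SatisfiesGBMRels {k : ℕ} {G : Type*} [Group G] (l : ℕ) (a : Fin k → Fin k → ZMod 2)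
    (f : Fin k → G) : Prop where
  sq_eq_one : ∀ p : Fin k, (p : ℕ) < l → f p ^ 2 = 1
  commute : ∀ p q : Fin k, p < q → (q : ℕ) < l → Commute (f p) (f q)
  conj_eq : ∀ p q : Fin k, p < q → l ≤ (q : ℕ) →
    f p * f q * (f p)⁻¹ = if a p q = 0 then f q else (f q)⁻¹

section Relations

variable {k l : ℕ} {a : Fin k → Fin k → ZMod 2} {G : Type*} [Group G]

theorem forall_mem_gbmRels_map_eq_one_iff {φ : FreeGroup (Fin k) →* G} :
    (∀ w ∈ gbmRels k l a, φ w = 1) ↔ SatisfiesGBMRels l a fun i => φ (FreeGroup.of i) := by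
  constructor
  · intro h
    have hsq (p : Fin k) (hp : (p : ℕ) < l) : φ (FreeGroup.of p) ^ 2 = 1 := by
      simpa only [map_pow] using h _ (.inl ⟨p, hp, rfl⟩)
    refine ⟨hsq, fun p q hpq hq => ?_, fun p q hpq hq => ?_⟩
    · rw [← mul_sq_eq_one_iff_commute (hsq p (lt_trans hpq hq)) (hsq q hq)]
      simpa only [map_mul, map_pow] using h _ (.inr (.inl ⟨p, q, hpq, hq, rfl⟩))
    · rcases lt_or_ge (p : ℕ) l with hp | hp
      · rw [← ite_mul_sq_eq_one_iff (hsq p hp)]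
        simpa only [apply_ite φ, map_mul, map_pow, map_inv] using
          h _ (.inr (.inr (.inr ⟨p, q, hpq, hp, hq, rfl⟩)))
      · rw [← ite_commutator_eq_one_iff]
        simpa only [apply_ite φ, map_mul, map_inv] using
          h _ (.inr (.inr (.inl ⟨p, q, hpq, hp, rfl⟩)))
  · rintro h _ (⟨p, hp, rfl⟩ | ⟨p, q, hpq, hq, rfl⟩ | ⟨p, q, hpq, hp, rfl⟩ |
      ⟨p, q, hpq, hp, hq, rfl⟩)
    · simpa only [map_pow] using h.sq_eq_one p hp
    · simpa only [map_mul, map_pow] using (mul_sq_eq_one_iff_commute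
        (h.sq_eq_one p (lt_trans hpq hq)) (h.sq_eq_one q hq)).2 (h.commute p q hpq hq)
    · simpa only [apply_ite φ, map_mul, map_inv] using
        ite_commutator_eq_one_iff.2 (h.conj_eq p q hpq (hp.trans hpq.le))
    · simpa only [apply_ite φ, map_mul, map_pow, map_inv] using
        (ite_mul_sq_eq_one_iff (h.sq_eq_one p hp)).2 (h.conj_eq p q hpq hq)

theorem satisfiesGBMRels_of : SatisfiesGBMRels l a (PresentedGroup.of (rels := gbmRels k l a)) :=
  forall_mem_gbmRels_map_eq_one_iff.1 fun _ => PresentedGroup.one_of_mem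

theorem SatisfiesGBMRels.lift_eq_one {f : Fin k → G} (hf : SatisfiesGBMRels l a f) :
    ∀ w ∈ gbmRels k l a, FreeGroup.lift f w = 1 :=
  forall_mem_gbmRels_map_eq_one_iff.2 (by simpa only [FreeGroup.lift_apply_of] using hf)

theorem SatisfiesGBMRels.commute_of_forall_eq_zero {f : Fin k → G} (hf : SatisfiesGBMRels l a f)
    (ha : ∀ p q : Fin k, p < q → l ≤ (q : ℕ) → a p q = 0) (p q : Fin k) :
    Commute (f p) (f q) := by
  have commute_of_lt {p q : Fin k} (hpq : p < q) : Commute (f p) (f q) := by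
    rcases lt_or_ge (q : ℕ) l with hq | hq
    · exact hf.commute p q hpq hq
    · have hconj := hf.conj_eq p q hpq hq
      rwa [if_pos (ha p q hpq hq), mul_inv_eq_iff_eq_mul] at hconj
  rcases lt_trichotomy p q with hpq | rfl | hqp
  · exact commute_of_lt hpq
  · exact .refl _
  · exact (commute_of_lt hqp).symm

theorem isMulCommutative_of_forall_eq_zero
    (ha : ∀ p q : Fin k, p < q → l ≤ (q : ℕ) → a p q = 0) :
    IsMulCommutative (PresentedGroup (gbmRels k l a)) := by
  refine isMulCommutative_of_closure_eq_top (PresentedGroup.closure_range_of _) ?_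
  rintro _ ⟨p, rfl⟩ _ ⟨q, rfl⟩
  exact satisfiesGBMRels_of.commute_of_forall_eq_zero ha p q

end Relations

section Dihedral

open DihedralGroup (r sr)

theorem closure_r_one_sr_zero (n : ℕ) :
    Subgroup.closure {r 1, sr 0} = (⊤ : Subgroup (DihedralGroup n)) := by
  have r_mem (i : ZMod n) : r i ∈ Subgroup.closure {r 1, sr 0} := by
    rw [← ZMod.intCast_zmod_cast i, ← DihedralGroup.r_one_zpow]
    exact zpow_mem (Subgroup.subset_closure (.inl rfl)) _
  refine (Subgroup.eq_top_iff' _).2 fun x => ?_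
  rcases x with i | i
  · exact r_mem i
  · rw [← zero_add i, ← DihedralGroup.sr_mul_r]
    exact mul_mem (Subgroup.subset_closure (.inr rfl)) (r_mem i)

theorem center_dihedralGroup_zero : Subgroup.center (DihedralGroup 0) = ⊥ := by
  refine (Subgroup.eq_bot_iff_forall _).2 fun x hx => ?_
  rw [Subgroup.mem_center_iff] at hx
  rcases x with i | i
  · have h : i = -i := by simpa using hx (sr 0)
    rw [self_eq_neg.1 h, DihedralGroup.r_zero]
  · have h : i + -1 = i + 1 := by simpa [sub_eq_add_neg] using hx (r 1)
    exact absurd (add_left_cancel h) (by decide)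

theorem not_isNilpotent_dihedralGroup_zero : ¬ Group.IsNilpotent (DihedralGroup 0) := fun _ =>
  Group.IsNilpotent.center_ne_bot _ center_dihedralGroup_zero

variable {k l : ℕ} {a : Fin k → Fin k → ZMod 2} {p q : Fin k}

/-- Candidate images of the generators of `Γ` in the infinite dihedral group `DihedralGroup 0`,
chosen to detect which generators invert `α_q`: the translation `r 1` for `α_q`, the reflection
`sr 0` for the earlier generators that invert it, and `1` for all others. -/
def dihedralFamily (a : Fin k → Fin k → ZMod 2) (q i : Fin k) : DihedralGroup 0 :=
  if i < q then if a i q = 0 then 1 else sr 0 else if i = q then r 1 else 1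

theorem dihedralFamily_self : dihedralFamily a q q = r 1 := by
  simp [dihedralFamily]

theorem dihedralFamily_of_lt (hpq : p < q) :
    dihedralFamily a q p = if a p q = 0 then 1 else sr 0 :=
  if_pos hpq

theorem dihedralFamily_of_gt (hqp : q < p) : dihedralFamily a q p = 1 := by
  rw [dihedralFamily, if_neg hqp.not_gt, if_neg hqp.ne']

theorem dihedralFamily_sq_eq_one (hpq : p < q) : dihedralFamily a q p ^ 2 = 1 := by
  rw [dihedralFamily_of_lt hpq]
  split_ifs <;> simp [sq]

theorem commute_dihedralFamily {s : Fin k} (hpq : p < q) (hsq : s < q) :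
    Commute (dihedralFamily a q p) (dihedralFamily a q s) := by
  rw [dihedralFamily_of_lt hpq, dihedralFamily_of_lt hsq]
  split_ifs <;> simp

theorem satisfiesGBMRels_dihedralFamily (hq : l ≤ (q : ℕ)) :
    SatisfiesGBMRels l a (dihedralFamily a q) where
  sq_eq_one p hp := dihedralFamily_sq_eq_one (hp.trans_le hq)
  commute p s hps hs :=
    have hsq : s < q := hs.trans_le hq
    commute_dihedralFamily (hps.trans hsq) hsq
  conj_eq p s hps _ := by
    rcases lt_trichotomy s q with hsq | rfl | hqs
    · rw [inv_eq_self_of_sq_eq_one (dihedralFamily_sq_eq_one hsq), ite_self,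
        mul_inv_eq_iff_eq_mul]
      exact commute_dihedralFamily (hps.trans hsq) hsq
    · rw [dihedralFamily_self, dihedralFamily_of_lt hps]
      split_ifs <;> simp
    · simp [dihedralFamily_of_gt hqs]

/-- The homomorphism from `Γ` to the infinite dihedral group extending `dihedralFamily a q`. -/
def toDihedral (a : Fin k → Fin k → ZMod 2) (hq : l ≤ (q : ℕ)) :
    PresentedGroup (gbmRels k l a) →* DihedralGroup 0 :=
  PresentedGroup.toGroup (satisfiesGBMRels_dihedralFamily hq).lift_eq_one

theorem toDihedral_surjective (hpq : p < q) (hq : l ≤ (q : ℕ)) (ha : a p q ≠ 0) :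
    Function.Surjective (toDihedral a hq) := by
  have map_of (i : Fin k) : toDihedral a hq (.of i) = dihedralFamily a q i :=
    PresentedGroup.toGroup.of _
  rw [← MonoidHom.range_eq_top, eq_top_iff, ← closure_r_one_sr_zero, Subgroup.closure_le]
  rintro _ (rfl | rfl)
  · exact ⟨.of q, (map_of q).trans dihedralFamily_self⟩
  · exact ⟨.of p, by rw [map_of, dihedralFamily_of_lt hpq, if_neg ha]⟩

theorem eq_zero_of_isNilpotent [Group.IsNilpotent (PresentedGroup (gbmRels k l a))]
    (hpq : p < q) (hq : l ≤ (q : ℕ)) : a p q = 0 := by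
  by_contra ha
  exact not_isNilpotent_dihedralGroup_zero
    (Group.nilpotent_of_surjective _ (toDihedral_surjective hpq hq ha))

end Dihedral

/-- The group `Γ` is nilpotent if and only if it is abelian. -/
theorem stmt_9 (k l : ℕ) (hk : 1 ≤ k) (hl : l ≤ k) (a : Fin k → Fin k → ZMod 2) :
    Group.IsNilpotent (PresentedGroup (gbmRels k l a)) ↔
      (∀ x y : PresentedGroup (gbmRels k l a), x * y = y * x) := by
  rw [← isMulCommutative_iff]
  refine ⟨fun _ => ?_, fun _ => ?_⟩
  · exact isMulCommutative_of_forall_eq_zero fun _ _ => eq_zero_of_isNilpotent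
  · open scoped IsMulCommutative in exact CommGroup.isNilpotent
end

section
/- Suppose A is in unipotent upper triangular form, n_1, …, n_l ≥ 2 and n_{l+1} = ⋯ = n_k = 1. Then the homogeneous component of degree 2 of the polynomial P is congruent modulo I to Σ_{s=1}^{l} T'_s · x_{s,0}² + Σ_{1 ≤ r < s ≤ l} T'_{rs} · x_{r,0} x_{s,0} + Σ_{1 ≤ r < s ≤ k, s > l} (T'_{rs} + a_{r,1}^s · T'_s) · x_{r,0} x_{s,0}, where 𝔽₂[x_{1,0}, …, x_{k,0}] is regarded as a subring of R. -/
open MvPolynomial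

/-- The ideal `I` of `R = 𝔽₂[x_{i,m} : 1 ≤ i ≤ k, 0 ≤ m ≤ n_i]` generated by the monomials
`x_{i,0} x_{i,1} ⋯ x_{i,n_i}` for each `i`, together with the linear forms
`x_{i,m} + Σ_{j=1}^{i} a_{j,m}^i x_{j,0}` for each `i` and `1 ≤ m ≤ n_i`
(within block `i` the variables `x_{i,1}, …, x_{i,n_i}` are 0-indexed by `m : Fin (n i)`,
`x_{i,m}` being the variable `X ⟨i, m.succ⟩`). -/
noncomputable def bottIdeal (k : ℕ) (n : Fin k → ℕ) (a : Fin k → (i : Fin k) → Fin (n i) → ZMod 2) :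
    Ideal (MvPolynomial (Σ i : Fin k, Fin (n i + 1)) (ZMod 2)) :=
  Ideal.span
    ({p | ∃ i : Fin k, p = ∏ m : Fin (n i + 1), X ⟨i, m⟩} ∪
     {p | ∃ i : Fin k, ∃ m : Fin (n i),
        p = X ⟨i, m.succ⟩ +
          ∑ j ∈ Finset.univ.filter (fun j : Fin k => j ≤ i), C (a j i m) * X ⟨j, 0⟩})

/-- `T'_s = Σ_{i,m} a_{s,m}^i + Σ_{i, m<m'} a_{s,m}^i a_{s,m'}^i
  + Σ_{i<j, m_i, m_j} a_{s,m_i}^i a_{s,m_j}^j ∈ 𝔽₂`. -/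
def Tp (k : ℕ) (n : Fin k → ℕ) (a : Fin k → (i : Fin k) → Fin (n i) → ZMod 2)
    (s : Fin k) : ZMod 2 :=
  (∑ i : Fin k, ∑ m : Fin (n i), a s i m)
  + (∑ i : Fin k, ∑ m : Fin (n i),
      ∑ m' ∈ Finset.univ.filter (fun m' : Fin (n i) => m < m'), a s i m * a s i m')
  + (∑ i : Fin k, ∑ j ∈ Finset.univ.filter (fun j : Fin k => i < j),
      ∑ mi : Fin (n i), ∑ mj : Fin (n j), a s i mi * a s j mj)

/-- `T'_{rs} = 1 + Σ_{i,m} (a_{r,m}^i + a_{s,m}^i) + Σ_{i, m ≠ m'} a_{r,m}^i a_{s,m'}^i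
  + Σ_{i ≠ j, m_i, m_j} a_{r,m_i}^i a_{s,m_j}^j ∈ 𝔽₂`. -/
def Tprs (k : ℕ) (n : Fin k → ℕ) (a : Fin k → (i : Fin k) → Fin (n i) → ZMod 2)
    (r s : Fin k) : ZMod 2 :=
  1 + (∑ i : Fin k, ∑ m : Fin (n i), (a r i m + a s i m))
  + (∑ i : Fin k, ∑ m : Fin (n i),
      ∑ m' ∈ Finset.univ.filter (fun m' : Fin (n i) => m' ≠ m), a r i m * a s i m')
  + (∑ i : Fin k, ∑ j ∈ Finset.univ.filter (fun j : Fin k => j ≠ i),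
      ∑ mi : Fin (n i), ∑ mj : Fin (n j), a r i mi * a s j mj)

/-- `T_s = Σ_{i, m<m'} a_{s,m}^i a_{s,m'}^i + Σ_{i<j, m_i, m_j} a_{s,m_i}^i a_{s,m_j}^j ∈ 𝔽₂`. -/
def Tq (k : ℕ) (n : Fin k → ℕ) (a : Fin k → (i : Fin k) → Fin (n i) → ZMod 2)
    (s : Fin k) : ZMod 2 :=
  (∑ i : Fin k, ∑ m : Fin (n i),
      ∑ m' ∈ Finset.univ.filter (fun m' : Fin (n i) => m < m'), a s i m * a s i m')
  + (∑ i : Fin k, ∑ j ∈ Finset.univ.filter (fun j : Fin k => i < j),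
      ∑ mi : Fin (n i), ∑ mj : Fin (n j), a s i mi * a s j mj)

/-- `T_{rs} = Σ_{i,m} a_{r,m}^i a_{s,m}^i ∈ 𝔽₂`. -/
def Trs (k : ℕ) (n : Fin k → ℕ) (a : Fin k → (i : Fin k) → Fin (n i) → ZMod 2)
    (r s : Fin k) : ZMod 2 :=
  ∑ i : Fin k, ∑ m : Fin (n i), a r i m * a s i m

/-!
Both products are products of factors `1 + L` with `L` linear, so the degree-two part of `P` is the
sum of `L * L'` over all pairs of distinct factors. As a quadratic form in the `x_{j,0}` it has
coefficient `T'_s` at `x_{s,0}²` and `T'_{rs}` at `x_{r,0} x_{s,0}`. When `n_s = 1`, the linear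
relation in `I` turns the monomial relation `x_{s,0} x_{s,1} = 0` into
`x_{s,0}² = ∑_{r < s} a_{r,1}^s x_{r,0} x_{s,0}`, which eliminates the squares with `s > l`.
-/

section HomogeneousComponents

variable {σ R ι : Type*} [CommSemiring R]

lemma homogeneousComponent_mul (p q : MvPolynomial σ R) (d : ℕ) :
    homogeneousComponent d (p * q) =
      ∑ ij ∈ Finset.HasAntidiagonal.antidiagonal d,
        homogeneousComponent ij.1 p * homogeneousComponent ij.2 q := by
  classical
  let := gradedAlgebra (σ := σ) (R := R)
  have component_eq (f : MvPolynomial σ R) (i : ℕ) :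
      (DirectSum.decompose (homogeneousSubmodule σ R) f i : MvPolynomial σ R) =
        homogeneousComponent i f := decomposition.decompose'_apply f i
  simp only [← component_eq, DirectSum.decompose_mul,
    DirectSum.coe_mul_apply_eq_sum_antidiagonal]

lemma homogeneousComponent_zero_of_constantCoeff_eq_one {p : MvPolynomial σ R}
    (hp : constantCoeff p = 1) : homogeneousComponent 0 p = 1 := by
  rw [homogeneousComponent_zero, ← constantCoeff_eq, hp, C_1]

lemma homogeneousComponent_one_mul_of_constantCoeff_eq_one {p q : MvPolynomial σ R}
    (hp : constantCoeff p = 1) (hq : constantCoeff q = 1) :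
    homogeneousComponent 1 (p * q) = homogeneousComponent 1 p + homogeneousComponent 1 q := by
  have antidiagonal_one : Finset.HasAntidiagonal.antidiagonal 1 = {(0, 1), (1, 0)} := rfl
  rw [homogeneousComponent_mul, antidiagonal_one, Finset.sum_pair (by simp),
    homogeneousComponent_zero_of_constantCoeff_eq_one hp,
    homogeneousComponent_zero_of_constantCoeff_eq_one hq]
  ring

lemma homogeneousComponent_two_mul_of_constantCoeff_eq_one {p q : MvPolynomial σ R}
    (hp : constantCoeff p = 1) (hq : constantCoeff q = 1) :
    homogeneousComponent 2 (p * q) = homogeneousComponent 2 p + homogeneousComponent 2 q +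
      homogeneousComponent 1 p * homogeneousComponent 1 q := by
  have antidiagonal_two : Finset.HasAntidiagonal.antidiagonal 2 = {(0, 2), (1, 1), (2, 0)} := rfl
  rw [homogeneousComponent_mul, antidiagonal_two, Finset.sum_insert (by simp),
    Finset.sum_pair (by simp), homogeneousComponent_zero_of_constantCoeff_eq_one hp,
    homogeneousComponent_zero_of_constantCoeff_eq_one hq]
  ring

lemma constantCoeff_prod_eq_one {p : ι → MvPolynomial σ R} (hp : ∀ i, constantCoeff (p i) = 1)
    (s : Finset ι) : constantCoeff (∏ i ∈ s, p i) = 1 := by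
  simp only [map_prod, hp, Finset.prod_const_one]

lemma homogeneousComponent_one_prod {p : ι → MvPolynomial σ R}
    (hp : ∀ i, constantCoeff (p i) = 1) (s : Finset ι) :
    homogeneousComponent 1 (∏ i ∈ s, p i) = ∑ i ∈ s, homogeneousComponent 1 (p i) := by
  classical
  induction s using Finset.induction_on with
  | empty => simpa using homogeneousComponent_eq_zero 1 (1 : MvPolynomial σ R) (by simp)
  | insert i s hi ih =>
    rw [Finset.prod_insert hi, Finset.sum_insert hi, ← ih,
      homogeneousComponent_one_mul_of_constantCoeff_eq_one (hp i) (constantCoeff_prod_eq_one hp s)]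

lemma homogeneousComponent_two_prod [LinearOrder ι] {p : ι → MvPolynomial σ R}
    (hp : ∀ i, constantCoeff (p i) = 1) (s : Finset ι) :
    homogeneousComponent 2 (∏ i ∈ s, p i) = ∑ i ∈ s, homogeneousComponent 2 (p i) +
      ∑ i ∈ s, ∑ j ∈ s with i < j, homogeneousComponent 1 (p i) * homogeneousComponent 1 (p j) := by
  induction s using Finset.induction_on_min with
  | empty => simpa using homogeneousComponent_eq_zero 2 (1 : MvPolynomial σ R) (by simp)
  | insert i s hmin ih =>
    have hi : i ∉ s := fun h ↦ lt_irrefl i (hmin i h)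
    have above_min : {j ∈ insert i s | i < j} = s := by
      rw [Finset.filter_insert, if_neg (lt_irrefl i), Finset.filter_true_of_mem hmin]
    have sum_above_of_mem : ∀ r ∈ s,
        ∑ j ∈ insert i s with r < j, homogeneousComponent 1 (p r) * homogeneousComponent 1 (p j) =
          ∑ j ∈ s with r < j, homogeneousComponent 1 (p r) * homogeneousComponent 1 (p j) :=
      fun r hr ↦ by rw [Finset.filter_insert, if_neg (hmin r hr).not_gt]
    rw [Finset.prod_insert hi, homogeneousComponent_two_mul_of_constantCoeff_eq_one (hp i)
      (constantCoeff_prod_eq_one hp s), homogeneousComponent_one_prod hp, ih,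
      Finset.sum_insert hi, Finset.sum_insert hi, above_min, Finset.mul_sum,
      Finset.sum_congr rfl sum_above_of_mem]
    ring

section OneAddLinear

variable {L : MvPolynomial σ R}

lemma constantCoeff_one_add_of_isHomogeneous_one (hL : L.IsHomogeneous 1) :
    constantCoeff (1 + L) = 1 := by
  rw [map_add, map_one, constantCoeff_eq, hL.coeff_eq_zero (by simp), add_zero]

lemma homogeneousComponent_one_one_add (hL : L.IsHomogeneous 1) :
    homogeneousComponent 1 (1 + L) = L := by
  rw [map_add, homogeneousComponent_of_mem (isHomogeneous_one σ R), homogeneousComponent_of_mem hL,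
    if_neg one_ne_zero, if_pos rfl, zero_add]

lemma homogeneousComponent_two_one_add (hL : L.IsHomogeneous 1) :
    homogeneousComponent 2 (1 + L) = 0 := by
  rw [map_add, homogeneousComponent_of_mem (isHomogeneous_one σ R), homogeneousComponent_of_mem hL,
    if_neg two_ne_zero, if_neg (by decide), zero_add]

end OneAddLinear

lemma constantCoeff_prod_one_add [Fintype ι] {L : ι → MvPolynomial σ R}
    (hL : ∀ i, (L i).IsHomogeneous 1) : constantCoeff (∏ i, (1 + L i)) = 1 :=
  constantCoeff_prod_eq_one (fun i ↦ constantCoeff_one_add_of_isHomogeneous_one (hL i)) _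

lemma homogeneousComponent_one_prod_one_add [Fintype ι] {L : ι → MvPolynomial σ R}
    (hL : ∀ i, (L i).IsHomogeneous 1) : homogeneousComponent 1 (∏ i, (1 + L i)) = ∑ i, L i := by
  simp only [homogeneousComponent_one_prod
    (fun i ↦ constantCoeff_one_add_of_isHomogeneous_one (hL i)),
    homogeneousComponent_one_one_add (hL _)]

lemma homogeneousComponent_two_prod_one_add [Fintype ι] [LinearOrder ι]
    {L : ι → MvPolynomial σ R} (hL : ∀ i, (L i).IsHomogeneous 1) :
    homogeneousComponent 2 (∏ i, (1 + L i)) = ∑ i, ∑ j with i < j, L i * L j := by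
  simp only [homogeneousComponent_two_prod
    (fun i ↦ constantCoeff_one_add_of_isHomogeneous_one (hL i)),
    homogeneousComponent_one_one_add (hL _), homogeneousComponent_two_one_add (hL _),
    Finset.sum_const_zero, zero_add]

end HomogeneousComponents

section QuadraticForms

variable {R A κ : Type*} [CommSemiring R] [CommSemiring A] [Algebra R A] [Fintype κ]

/-- The value at `x` of the quadratic form with coefficient matrix `B`, as a linear function of `B`.
The matrix need be neither symmetric nor triangular, so `B` and `Bᵀ` give the same form. -/
def quadForm (x : κ → A) : Matrix κ κ R →ₗ[R] A where
  toFun B := ∑ r, ∑ s, B r s • (x r * x s)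
  map_add' B B' := by simp only [Matrix.add_apply, add_smul, Finset.sum_add_distrib]
  map_smul' c B := by
    simp only [Matrix.smul_apply, smul_assoc, Finset.smul_sum, RingHom.id_apply]

lemma linearCombination_mul_linearCombination (x : κ → A) (u v : κ → R) :
    Fintype.linearCombination R x u * Fintype.linearCombination R x v =
      quadForm x (Matrix.vecMulVec u v) := by
  simp only [Fintype.linearCombination_apply, quadForm, LinearMap.coe_mk, AddHom.coe_mk,
    Matrix.vecMulVec_apply, Finset.sum_mul_sum, smul_mul_smul_comm]

lemma sum_sum_ne_eq_sum_sum_lt {M : Type*} [AddCommMonoid M] [LinearOrder κ] (f : κ → κ → M) :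
    ∑ i, ∑ j with j ≠ i, f i j = ∑ i, ∑ j with i < j, (f i j + f j i) := by
  cases isEmpty_or_nonempty κ
  · simp only [Finset.univ_eq_empty, Finset.sum_empty]
  let := Fintype.toBoundedOrder κ
  let := Fintype.toLocallyFiniteOrder (α := κ)
  simpa only [Finset.filter_lt_eq_Ioi, Finset.filter_ne', Finset.compl_singleton] using
    (Finset.sum_sum_Ioi_add_eq_sum_sum_off_diag fun j i ↦ f i j).symm

lemma quadForm_eq_sum_sq_add_sum_lt [LinearOrder κ] (x : κ → A) (B : Matrix κ κ R) :
    quadForm x B = ∑ s, B s s • x s ^ 2 +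
      ∑ r, ∑ s with r < s, (B r s + B s r) • (x r * x s) := by
  have offDiag : ∑ r, ∑ s with s ≠ r, B r s • (x r * x s) =
      ∑ r, ∑ s with r < s, (B r s + B s r) • (x r * x s) := by
    simp only [sum_sum_ne_eq_sum_sum_lt, add_smul, mul_comm]
  rw [← offDiag, ← Finset.sum_add_distrib]
  refine Finset.sum_congr rfl fun r _ ↦ ?_
  rw [Finset.filter_ne', sq,
    Finset.add_sum_erase _ (fun s ↦ B r s • (x r * x s)) (Finset.mem_univ r)]

end QuadraticForms

section DegreeTwoPart

variable {R ι κ : Type*} {β : ι → Type*} [CommSemiring R] [Fintype ι] [LinearOrder ι]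
  [∀ i, Fintype (β i)] [∀ i, LinearOrder (β i)]

lemma homogeneousComponent_two_prod_prod_one_add {σ : Type*}
    {L : (i : ι) → β i → MvPolynomial σ R} (hL : ∀ i m, (L i m).IsHomogeneous 1) :
    homogeneousComponent 2 (∏ i, ∏ m, (1 + L i m)) =
      ∑ i, ∑ m, ∑ m' with m < m', L i m * L i m' +
        ∑ i, ∑ j with i < j, ∑ m, ∑ m', L i m * L j m' := by
  simp only [homogeneousComponent_two_prod (fun i ↦ constantCoeff_prod_one_add (hL i)),
    homogeneousComponent_two_prod_one_add (hL _), homogeneousComponent_one_prod_one_add (hL _),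
    Finset.sum_mul_sum]

/-- The matrix whose `quadForm` is the degree-two part of
`(∏ j, (1 + x j)) * ∏ i, ∏ m, (1 + ∑ j, a j i m * x j)`, except for the terms coming from the first
product alone. The three summands collect the pairs of factors of which one lies in the first
product, both lie in the same block, or the two lie in different blocks. -/
def degreeTwoMatrix (a : κ → (i : ι) → β i → R) : Matrix κ κ R :=
  Matrix.of fun r s ↦ ∑ i, ∑ m, a s i m + ∑ i, ∑ m, ∑ m' with m < m', a r i m * a s i m' +
    ∑ i, ∑ j with i < j, ∑ m, ∑ m', a r i m * a s j m'

lemma degreeTwoMatrix_eq_sum_vecMulVec (a : κ → (i : ι) → β i → R) :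
    degreeTwoMatrix a = Matrix.vecMulVec 1 (∑ i, ∑ m, fun j ↦ a j i m) +
      ∑ i, ∑ m, ∑ m' with m < m', Matrix.vecMulVec (fun j ↦ a j i m) (fun j ↦ a j i m') +
      ∑ i, ∑ j with i < j, ∑ m, ∑ m',
        Matrix.vecMulVec (fun t ↦ a t i m) (fun t ↦ a t j m') := by
  ext r s
  simp only [degreeTwoMatrix, Matrix.of_apply, Matrix.add_apply, Matrix.sum_apply,
    Matrix.vecMulVec_apply, Finset.sum_apply, Pi.one_apply, one_mul]

lemma quadForm_degreeTwoMatrix {A : Type*} [CommSemiring A] [Algebra R A] [Fintype κ] (x : κ → A)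
    (a : κ → (i : ι) → β i → R) :
    quadForm x (degreeTwoMatrix a) = (∑ j, x j) * ∑ i, ∑ m, ∑ j, a j i m • x j +
      (∑ i, ∑ m, ∑ m' with m < m', (∑ j, a j i m • x j) * ∑ j, a j i m' • x j +
        ∑ i, ∑ i' with i < i', ∑ m, ∑ m', (∑ j, a j i m • x j) * ∑ j, a j i' m' • x j) := by
  have linearCombination_column (i : ι) (m : β i) :
      ∑ j, a j i m • x j = Fintype.linearCombination R x (fun j ↦ a j i m) :=
    (Fintype.linearCombination_apply R x _).symm
  have linearCombination_one : ∑ j, x j = Fintype.linearCombination R x 1 := by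
    simp only [Fintype.linearCombination_apply, Pi.one_apply, one_smul]
  simp only [degreeTwoMatrix_eq_sum_vecMulVec, linearCombination_column, linearCombination_one,
    map_add, ← map_sum, linearCombination_mul_linearCombination, add_assoc]

theorem homogeneousComponent_two_prod_one_add_mul_prod_prod_one_add {σ : Type*} [Fintype κ]
    [LinearOrder κ] {x : κ → MvPolynomial σ R} (hx : ∀ j, (x j).IsHomogeneous 1)
    (a : κ → (i : ι) → β i → R) :
    homogeneousComponent 2 ((∏ j, (1 + x j)) * ∏ i, ∏ m, (1 + ∑ j, C (a j i m) * x j)) =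
      ∑ s, C (degreeTwoMatrix a s s) * x s ^ 2 +
        ∑ r, ∑ s with r < s,
          C (1 + (degreeTwoMatrix a r s + degreeTwoMatrix a s r)) * (x r * x s) := by
  have hL (i : ι) (m : β i) : (∑ j, a j i m • x j).IsHomogeneous 1 := by
    simpa only [smul_eq_C_mul] using IsHomogeneous.sum _ _ _ fun j _ ↦ (hx j).C_mul (a j i m)
  have constantCoeff_block (i : ι) : constantCoeff (∏ m, (1 + ∑ j, a j i m • x j)) = 1 :=
    constantCoeff_prod_one_add (hL i)
  simp only [← smul_eq_C_mul]
  rw [homogeneousComponent_two_mul_of_constantCoeff_eq_one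
      (constantCoeff_prod_one_add hx) (constantCoeff_prod_eq_one constantCoeff_block _),
    homogeneousComponent_two_prod_one_add hx, homogeneousComponent_two_prod_prod_one_add hL,
    homogeneousComponent_one_prod_one_add hx, homogeneousComponent_one_prod constantCoeff_block]
  simp only [homogeneousComponent_one_prod_one_add (hL _)]
  rw [add_assoc, add_comm _ (_ * _), ← quadForm_degreeTwoMatrix, quadForm_eq_sum_sq_add_sum_lt]
  simp only [add_smul, one_smul, Finset.sum_add_distrib]
  ring

end DegreeTwoPart

lemma Tp_eq_degreeTwoMatrix (k : ℕ) (n : Fin k → ℕ)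
    (a : Fin k → (i : Fin k) → Fin (n i) → ZMod 2) (s : Fin k) :
    Tp k n a s = degreeTwoMatrix a s s :=
  rfl

lemma Tprs_eq_degreeTwoMatrix (k : ℕ) (n : Fin k → ℕ)
    (a : Fin k → (i : Fin k) → Fin (n i) → ZMod 2) (r s : Fin k) :
    Tprs k n a r s = 1 + (degreeTwoMatrix a r s + degreeTwoMatrix a s r) := by
  have swap_blocks (i j : Fin k) : ∑ m, ∑ m', a r j m * a s i m' =
      ∑ m, ∑ m', a s i m * a r j m' := by
    rw [Finset.sum_comm]
    simp only [mul_comm]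
  simp only [Tprs, degreeTwoMatrix, Matrix.of_apply, sum_sum_ne_eq_sum_sum_lt,
    Finset.sum_add_distrib, swap_blocks]
  simp only [mul_comm (a s _ _) (a r _ _)]
  ring

lemma sum_sq_add_sum_lt_mul_of_sq_eq {A κ : Type*} [CommSemiring A] [Fintype κ] [LinearOrder κ]
    (p : κ → Prop) [DecidablePred p] (x c : κ → A) (b d : κ → κ → A)
    (hx : ∀ s, ¬ p s → x s ^ 2 = ∑ r with r < s, b r s * (x r * x s)) :
    ∑ s, c s * x s ^ 2 + ∑ r, ∑ s with r < s, d r s * (x r * x s) =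
      ∑ s with p s, c s * x s ^ 2 + ∑ r, ∑ s with r < s ∧ p s, d r s * (x r * x s) +
        ∑ r, ∑ s with r < s ∧ ¬ p s, (d r s + b r s * c s) * (x r * x s) := by
  have squares : ∑ s with ¬ p s, c s * x s ^ 2 =
      ∑ r, ∑ s with r < s ∧ ¬ p s, b r s * c s * (x r * x s) := by
    calc
      _ = ∑ s with ¬ p s, ∑ r with r < s, b r s * c s * (x r * x s) := by
        refine Finset.sum_congr rfl fun s hs ↦ ?_
        rw [hx s (Finset.mem_filter.1 hs).2, Finset.mul_sum]
        exact Finset.sum_congr rfl fun r _ ↦ by ring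
      _ = _ := Finset.sum_comm' fun s r ↦ by simp [and_comm]
  have mixed (r : κ) : ∑ s with r < s, d r s * (x r * x s) =
      ∑ s with r < s ∧ p s, d r s * (x r * x s) +
        ∑ s with r < s ∧ ¬ p s, d r s * (x r * x s) := by
    simp only [← Finset.filter_filter, Finset.sum_filter_add_sum_filter_not]
  rw [← Finset.sum_filter_add_sum_filter_not Finset.univ p, squares]
  simp only [mixed, add_mul, Finset.sum_add_distrib]
  ring

section BottIdeal

variable {k : ℕ} {n : Fin k → ℕ} (a : Fin k → (i : Fin k) → Fin (n i) → ZMod 2)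

lemma mk_bottIdeal_X_succ (i : Fin k) (m : Fin (n i)) :
    Ideal.Quotient.mk (bottIdeal k n a) (X ⟨i, m.succ⟩) =
      Ideal.Quotient.mk (bottIdeal k n a) (∑ j with j ≤ i, C (a j i m) * X ⟨j, 0⟩) := by
  rw [Ideal.Quotient.eq, CharTwo.sub_eq_add]
  exact Ideal.subset_span (Or.inr ⟨i, m, rfl⟩)

lemma X_zero_mul_X_one_mem_bottIdeal {s : Fin k} (hs : n s = 1) (m : Fin (n s)) :
    X ⟨s, 0⟩ * X ⟨s, m.succ⟩ ∈ bottIdeal k n a := by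
  refine Ideal.subset_span (Or.inl ⟨s, ?_⟩)
  have eq_m (m' : Fin (n s)) : m' = m := by omega
  rw [Fin.prod_univ_succ, Fintype.prod_eq_single m fun m' hm' ↦ absurd (eq_m m') hm']

lemma mk_bottIdeal_X_zero_sq {s : Fin k} (hs : n s = 1) {m : Fin (n s)} (hdiag : a s s m = 1) :
    Ideal.Quotient.mk (bottIdeal k n a) (X ⟨s, 0⟩ ^ 2) =
      Ideal.Quotient.mk (bottIdeal k n a)
        (∑ r with r < s, C (a r s m) * (X ⟨r, 0⟩ * X ⟨s, 0⟩)) := by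
  have le_eq_insert : Finset.univ.filter (· ≤ s) = insert s (Finset.univ.filter (· < s)) := by
    ext j
    simp [le_iff_eq_or_lt]
  have X_mul_X_eq_zero := Ideal.Quotient.eq_zero_iff_mem.2 (X_zero_mul_X_one_mem_bottIdeal a hs m)
  rw [map_mul, mk_bottIdeal_X_succ, ← map_mul, le_eq_insert, Finset.sum_insert (by simp), hdiag,
    C_1, one_mul, Ideal.Quotient.eq_zero_iff_mem] at X_mul_X_eq_zero
  rw [Ideal.Quotient.eq, CharTwo.sub_eq_add]
  convert X_mul_X_eq_zero using 1
  rw [mul_add, sq, Finset.mul_sum]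
  exact congrArg _ (Finset.sum_congr rfl fun r _ ↦ by ring)

end BottIdeal

theorem stmt_13_general (k : ℕ) (n : Fin k → ℕ) (hn : ∀ i, 1 ≤ n i)
    (a : Fin k → (i : Fin k) → Fin (n i) → ZMod 2) (p : Fin k → Prop) [DecidablePred p]
    (hdiag : ∀ i, ¬ p i → ∀ m, a i i m = 1) (h1 : ∀ i, ¬ p i → n i = 1) :
    homogeneousComponent 2
        ((∏ i : Fin k, (1 + X (⟨i, 0⟩ : Σ i : Fin k, Fin (n i + 1)))) *
          ∏ i : Fin k, ∏ m : Fin (n i), (1 + ∑ j : Fin k, C (a j i m) * X ⟨j, 0⟩)) -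
      (∑ s with p s, C (Tp k n a s) * X ⟨s, 0⟩ ^ 2 +
        ∑ r, ∑ s with r < s ∧ p s, C (Tprs k n a r s) * (X ⟨r, 0⟩ * X ⟨s, 0⟩) +
        ∑ r, ∑ s with r < s ∧ ¬ p s,
          C (Tprs k n a r s + a r s ⟨0, hn s⟩ * Tp k n a s) * (X ⟨r, 0⟩ * X ⟨s, 0⟩)) ∈
      bottIdeal k n a := by
  let π := Ideal.Quotient.mk (bottIdeal k n a)
  have sq_eq (s : Fin k) (hs : ¬ p s) : π (X ⟨s, 0⟩) ^ 2 =
      ∑ r with r < s, π (C (a r s ⟨0, hn s⟩)) * (π (X ⟨r, 0⟩) * π (X ⟨s, 0⟩)) := by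
    simpa only [map_pow, map_sum, map_mul] using mk_bottIdeal_X_zero_sq a (h1 s hs) (hdiag s hs _)
  rw [homogeneousComponent_two_prod_one_add_mul_prod_prod_one_add (fun j ↦ isHomogeneous_X _ _) a,
    ← Ideal.Quotient.eq]
  simp only [← Tp_eq_degreeTwoMatrix, ← Tprs_eq_degreeTwoMatrix]
  simpa only [map_add, map_sum, map_mul, map_pow] using
    sum_sq_add_sum_lt_mul_of_sq_eq p (fun s ↦ π (X ⟨s, 0⟩)) (fun s ↦ π (C (Tp k n a s)))
      (fun r s ↦ π (C (a r s ⟨0, hn s⟩))) (fun r s ↦ π (C (Tprs k n a r s))) sq_eq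

/-- Suppose `A` is in unipotent upper triangular form, `n_1, …, n_l ≥ 2` and
`n_{l+1} = ⋯ = n_k = 1`.  Then the degree-2 homogeneous component of
`P = ∏_i (1 + x_{i,0}) · ∏_{i,m} (1 + Σ_j a_{j,m}^i x_{j,0})` (regarded as an element of `R`) is
congruent modulo `I` to
`Σ_{s ≤ l} T'_s x_{s,0}² + Σ_{r<s≤l} T'_{rs} x_{r,0} x_{s,0}
  + Σ_{r<s, s>l} (T'_{rs} + a_{r,1}^s T'_s) x_{r,0} x_{s,0}`. -/
theorem stmt_13 (k l : ℕ) (hk : 1 ≤ k) (hl : l ≤ k) (n : Fin k → ℕ) (hn : ∀ i, 1 ≤ n i)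
    (a : Fin k → (i : Fin k) → Fin (n i) → ZMod 2)
    (hUT : ∀ j i : Fin k, i < j → ∀ m : Fin (n i), a j i m = 0)
    (hdiag : ∀ i : Fin k, ∀ m : Fin (n i), a i i m = 1)
    (h2 : ∀ i : Fin k, (i : ℕ) < l → 2 ≤ n i)
    (h1 : ∀ i : Fin k, l ≤ (i : ℕ) → n i = 1) :
    (MvPolynomial.homogeneousComponent 2
        ((∏ i : Fin k, (1 + X (⟨i, 0⟩ : Σ i : Fin k, Fin (n i + 1))))
          * ∏ i : Fin k, ∏ m : Fin (n i),
              (1 + ∑ j : Fin k, C (a j i m) * X (⟨j, 0⟩ : Σ i : Fin k, Fin (n i + 1)))))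
      - ((∑ s ∈ Finset.univ.filter (fun s : Fin k => (s : ℕ) < l),
            C (Tp k n a s) * X (⟨s, 0⟩ : Σ i : Fin k, Fin (n i + 1)) ^ 2)
        + (∑ r : Fin k, ∑ s ∈ Finset.univ.filter (fun s : Fin k => r < s ∧ (s : ℕ) < l),
            C (Tprs k n a r s)
              * (X (⟨r, 0⟩ : Σ i : Fin k, Fin (n i + 1))
                * X (⟨s, 0⟩ : Σ i : Fin k, Fin (n i + 1))))
        + (∑ r : Fin k, ∑ s ∈ Finset.univ.filter (fun s : Fin k => r < s ∧ l ≤ (s : ℕ)),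
            C (Tprs k n a r s + a r s ⟨0, hn s⟩ * Tp k n a s)
              * (X (⟨r, 0⟩ : Σ i : Fin k, Fin (n i + 1))
                * X (⟨s, 0⟩ : Σ i : Fin k, Fin (n i + 1)))))
      ∈ bottIdeal k n a := by
  simpa only [not_lt] using stmt_13_general k n hn a (fun i ↦ (i : ℕ) < l)
    (fun i _ ↦ hdiag i) (fun i hi ↦ h1 i (not_lt.1 hi))
end

section
/- Suppose A is in unipotent upper triangular form, n_1, …, n_l ≥ 2 and n_{l+1} = ⋯ = n_k = 1. Then the images in the quotient ring R/I of the monomials x_{s,0}² for 1 ≤ s ≤ l, together with the monomials x_{r,0} x_{s,0} for 1 ≤ r < s ≤ k, form a basis over 𝔽₂ of the image in R/I of the 𝔽₂-subspace of R consisting of homogeneous polynomials of degree 2. -/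
open MvPolynomial

/-!
Eliminating the variables `x_{i,m}` with `m ≥ 1` turns `R/I` into the quotient of
`𝔽₂[x_1, …, x_k]` by homogeneous relations `x_i ∏ₘ ℓ_{i,m}` of degree `n_i + 1`. Since all of
these degrees are at least two, the relations in degree two are spanned by those with `n_i = 1`.
Each of them has the form `x_i² + ∑_{j < i} a_j x_j x_i`, and thus only serves to rewrite the square
`x_i²` in mixed monomials `x_j x_i`. The monomials that are never rewritten form a basis.
-/

section LinearAlgebra

variable {ι K M N N' : Type*} [Ring K] [AddCommGroup M] [AddCommGroup N] [AddCommGroup N']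
  [Module K M] [Module K N] [Module K N']

theorem linearIndependent_comp_of_ker_le {v : ι → M} {f : M →ₗ[K] N} {g : M →ₗ[K] N'}
    (hfg : LinearMap.ker f ≤ LinearMap.ker g) (hv : LinearIndependent K (g ∘ v)) :
    LinearIndependent K (f ∘ v) := by
  rw [linearIndependent_iff] at hv ⊢
  intro c hc
  rw [← Finsupp.apply_linearCombination] at hc
  exact hv c (by rw [← Finsupp.apply_linearCombination, hfg hc])

end LinearAlgebra

section HomogeneousComponent

variable {σ K : Type*}

theorem mem_pow_idealOfVars_of_isHomogeneous [CommSemiring K] {p : MvPolynomial σ K} {n : ℕ}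
    (hp : p.IsHomogeneous n) : p ∈ idealOfVars σ K ^ n :=
  (mem_pow_idealOfVars_iff' n p).2 fun _ hd ↦ hp.coeff_eq_zero hd.ne

theorem homogeneousComponent_eq_zero_of_mem_pow [CommSemiring K] {p : MvPolynomial σ K} {m n : ℕ}
    (hnm : n < m) (hp : p ∈ idealOfVars σ K ^ m) : homogeneousComponent n p = 0 :=
  homogeneousComponent_eq_zero' n p fun d hd ↦
    (hnm.trans_le ((mem_pow_idealOfVars_iff m p).1 hp d hd)).ne'

theorem homogeneousComponent_mul_of_mem_pow [CommRing K] {p q : MvPolynomial σ K} {n : ℕ}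
    (hq : q ∈ idealOfVars σ K ^ n) :
    homogeneousComponent n (p * q) = constantCoeff p • homogeneousComponent n q := by
  have hp : p - C (constantCoeff p) ∈ idealOfVars σ K ^ 1 :=
    (mem_pow_idealOfVars_iff' 1 _).2 fun d hd ↦ by
      rw [(Finsupp.degree_eq_zero_iff d).1 (Nat.lt_one_iff.1 hd)]
      simp [constantCoeff_eq]
  have hpq : (p - C (constantCoeff p)) * q ∈ idealOfVars σ K ^ (1 + n) :=
    pow_add (idealOfVars σ K) 1 n ▸ Ideal.mul_mem_mul hp hq
  have := homogeneousComponent_eq_zero_of_mem_pow (by omega : n < 1 + n) hpq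
  rwa [sub_mul, map_sub, homogeneousComponent_C_mul, sub_eq_zero, ← smul_eq_C_mul] at this

theorem homogeneousComponent_mem_span_of_mem_ideal_span {ι : Type*} [CommRing K]
    {q : ι → MvPolynomial σ K} {d : ι → ℕ} {n : ℕ} (hq : ∀ i, (q i).IsHomogeneous (d i))
    (hd : ∀ i, n ≤ d i) {p : MvPolynomial σ K}
    (hp : p ∈ Ideal.span (Set.range q)) :
    homogeneousComponent n p ∈ Submodule.span K (q '' {i | d i = n}) := by
  obtain ⟨c, rfl⟩ := Finsupp.mem_ideal_span_range_iff_exists_finsupp.1 hp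
  rw [Finsupp.sum, map_sum]
  refine Submodule.sum_mem _ fun i _ ↦ ?_
  have hqi := mem_pow_idealOfVars_of_isHomogeneous (hq i)
  rw [homogeneousComponent_mul_of_mem_pow (Ideal.pow_le_pow_right (hd i) hqi)]
  refine Submodule.smul_mem _ _ ?_
  rw [homogeneousComponent_of_mem (hq i)]
  split_ifs with h
  · exact Submodule.subset_span ⟨i, h.symm, rfl⟩
  · exact Submodule.zero_mem _

end HomogeneousComponent

section QuadraticFamily

variable {ι A B K : Type*}

/-- The degree-two expressions in a family `v` that index the basis: the squares `v s ^ 2` with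
`P s`, together with all products `v r * v s` with `r < s`. -/
def quadraticFamily [LT ι] [Monoid A] (P : ι → Prop) (v : ι → A) :
    {s // P s} ⊕ {p : ι × ι // p.1 < p.2} → A :=
  Sum.elim (fun s ↦ v s.1 ^ 2) (fun p ↦ v p.1.1 * v p.1.2)

theorem map_quadraticFamily [LT ι] [Monoid A] [Monoid B] {F : Type*} [FunLike F A B]
    [MonoidHomClass F A B] (f : F) (P : ι → Prop) (v : ι → A)
    (x : {s // P s} ⊕ {p : ι × ι // p.1 < p.2}) :
    f (quadraticFamily P v x) = quadraticFamily P (fun i ↦ f (v i)) x := by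
  rcases x with s | p <;> simp [quadraticFamily]

theorem isHomogeneous_quadraticFamily_X [LT ι] [CommSemiring K] {P : ι → Prop}
    (x : {s // P s} ⊕ {p : ι × ι // p.1 < p.2}) :
    (quadraticFamily P (X : ι → MvPolynomial ι K) x).IsHomogeneous 2 := by
  rcases x with s | p
  · exact isHomogeneous_X_pow s.1 2
  · exact (isHomogeneous_X K p.1.1).mul (isHomogeneous_X K p.1.2)

theorem span_quadraticFamily [LinearOrder ι] [CommSemiring K] [CommSemiring A] [Algebra K A]
    {P : ι → Prop} {v : ι → A}
    (hv : ∀ s, ¬ P s → v s ^ 2 ∈ Submodule.span K (Set.range (quadraticFamily P v))) :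
    Submodule.span K (Set.range (quadraticFamily P v)) = Submodule.span K (Set.range v) ^ 2 := by
  have hlt : ∀ {r s}, r < s → v r * v s ∈ Submodule.span K (Set.range (quadraticFamily P v)) :=
    fun h ↦ Submodule.subset_span ⟨Sum.inr ⟨(_, _), h⟩, rfl⟩
  rw [pow_two, Submodule.span_mul_span]
  refine le_antisymm (Submodule.span_mono ?_) (Submodule.span_le.2 ?_)
  · rintro _ ⟨s | p, rfl⟩
    · exact ⟨_, ⟨s.1, rfl⟩, _, ⟨s.1, rfl⟩, (pow_two _).symm⟩
    · exact ⟨_, ⟨p.1.1, rfl⟩, _, ⟨p.1.2, rfl⟩, rfl⟩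
  · rintro _ ⟨_, ⟨r, rfl⟩, _, ⟨s, rfl⟩, rfl⟩
    rcases lt_trichotomy r s with h | rfl | h
    · exact hlt h
    · by_cases hr : P r
      · exact Submodule.subset_span ⟨Sum.inl ⟨r, hr⟩, pow_two _⟩
      · simpa only [pow_two, SetLike.mem_coe] using hv r hr
    · simpa only [mul_comm, SetLike.mem_coe] using hlt h

theorem linearIndependent_quadraticFamily_X [Preorder ι] [CommSemiring K] (P : ι → Prop) :
    LinearIndependent K (quadraticFamily P (X : ι → MvPolynomial ι K)) := by
  let e : {s // P s} ⊕ {p : ι × ι // p.1 < p.2} → ι →₀ ℕ :=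
    Sum.elim (fun s ↦ .single s.1 1 + .single s.1 1) (fun p ↦ .single p.1.1 1 + .single p.1.2 1)
  have he : Function.Injective e := by
    rintro (⟨s, hs⟩ | ⟨⟨p, p'⟩, hp⟩) (⟨t, ht⟩ | ⟨⟨q, q'⟩, hq⟩) h <;>
      simp only [e, Sum.elim_inl, Sum.elim_inr,
        Finsupp.single_add_single_eq_single_add_single one_ne_zero one_ne_zero] at h <;>
      grind
  convert (basisMonomials ι K).linearIndependent.comp e he using 1
  ext1 (s | p) <;> simp [quadraticFamily, e, X, pow_two, monomial_mul]

end QuadraticFamily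

section SquareElimination

variable {ι K : Type*}

theorem coeff_single_two_X_mul [CommSemiring K] [DecidableEq ι] (i j : ι)
    (p : MvPolynomial ι K) :
    coeff (.single j 2) (X i * p) = if i = j then coeff (.single j 1) p else 0 := by
  rw [coeff_X_mul', Finsupp.support_single j two_ne_zero]
  split_ifs <;> simp_all [← Finsupp.single_tsub]

variable [CommRing K]

/-- The endomorphism `f ↦ f - ∑ i ∈ T, [xᵢ²]f • q i`. When `[xⱼ²](q i) = δᵢⱼ` for `i, j ∈ T`, it
uses the relations `q i = 0` to rewrite each square `xᵢ²` with `i ∈ T` in the other monomials. -/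
noncomputable def squareElimination (T : Finset ι) (q : ι → MvPolynomial ι K) :
    MvPolynomial ι K →ₗ[K] MvPolynomial ι K :=
  LinearMap.id - ∑ i ∈ T, (lcoeff K (.single i 2)).smulRight (q i)

theorem squareElimination_apply (T : Finset ι) (q : ι → MvPolynomial ι K) (f : MvPolynomial ι K) :
    squareElimination T q f = f - ∑ i ∈ T, coeff (.single i 2) f • q i := by
  simp [squareElimination]

theorem squareElimination_eq_zero_of_mem_span [DecidableEq ι] {T : Finset ι}
    {q : ι → MvPolynomial ι K}
    (hq : ∀ i ∈ T, ∀ j ∈ T, coeff (.single j 2) (q i) = if i = j then 1 else 0)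
    {f : MvPolynomial ι K} (hf : f ∈ Submodule.span K (q '' T)) :
    squareElimination T q f = 0 := by
  suffices Submodule.span K (q '' T) ≤ LinearMap.ker (squareElimination T q) from this hf
  rw [Submodule.span_le]
  rintro _ ⟨i, hi, rfl⟩
  rw [SetLike.mem_coe, LinearMap.mem_ker, squareElimination_apply, sub_eq_zero,
    Finset.sum_congr rfl fun j hj ↦ by rw [hq i hi j hj]]
  simp [Finset.mem_coe.1 hi]

theorem squareElimination_quadraticFamily_X [Preorder ι] {T : Finset ι} {P : ι → Prop}
    (hT : ∀ i ∈ T, ¬ P i) (q : ι → MvPolynomial ι K)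
    (x : {s // P s} ⊕ {p : ι × ι // p.1 < p.2}) :
    squareElimination T q (quadraticFamily P X x) = quadraticFamily P X x := by
  classical
  rw [squareElimination_apply, sub_eq_self]
  refine Finset.sum_eq_zero fun i hi ↦ ?_
  rcases x with s | p
  · have hsi : s.1 ≠ i := fun h ↦ hT i hi (h ▸ s.2)
    simp [quadraticFamily, pow_two, coeff_single_two_X_mul, hsi]
  · have hp : p.1.1 = i → p.1.2 ≠ i := fun h ↦ h ▸ p.2.ne'
    simp +contextual [quadraticFamily, coeff_single_two_X_mul, coeff_X, Finsupp.single_left_inj, hp]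

end SquareElimination

section BottIdeal

variable {k : ℕ} {n : Fin k → ℕ} {a : Fin k → (i : Fin k) → Fin (n i) → ZMod 2}

/-- The linear form `∑ j ≤ i, a j i m • x_j` that replaces `x_{i,m}` with `m ≥ 1`, and `x_i` in
place of `x_{i,0}`; these substitutions eliminate the linear generators of `bottIdeal`. -/
noncomputable def bottForm (a : Fin k → (i : Fin k) → Fin (n i) → ZMod 2) :
    (Σ i : Fin k, Fin (n i + 1)) → MvPolynomial (Fin k) (ZMod 2) :=
  fun v ↦ Fin.cases (X v.1) (fun m ↦ ∑ j ∈ Finset.Iic v.1, C (a j v.1 m) * X j) v.2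

@[simp]
theorem bottForm_zero (i : Fin k) : bottForm a ⟨i, 0⟩ = X i := rfl

@[simp]
theorem bottForm_succ (i : Fin k) (m : Fin (n i)) :
    bottForm a ⟨i, m.succ⟩ = ∑ j ∈ Finset.Iic i, C (a j i m) * X j := rfl

theorem isHomogeneous_bottForm (v : Σ i : Fin k, Fin (n i + 1)) :
    (bottForm a v).IsHomogeneous 1 := by
  obtain ⟨i, m⟩ := v
  cases m using Fin.cases with
  | zero => exact isHomogeneous_X _ i
  | succ m => exact IsHomogeneous.sum _ _ _ fun j _ ↦ isHomogeneous_C_mul_X _ j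

/-- The image of the monomial `∏ m, x_{i,m}` after the substitution `bottForm`. -/
noncomputable def bottRelation (a : Fin k → (i : Fin k) → Fin (n i) → ZMod 2) (i : Fin k) :
    MvPolynomial (Fin k) (ZMod 2) :=
  ∏ m, bottForm a ⟨i, m⟩

theorem isHomogeneous_bottRelation (i : Fin k) : (bottRelation a i).IsHomogeneous (n i + 1) := by
  simpa [bottRelation] using IsHomogeneous.prod Finset.univ (fun m ↦ bottForm a ⟨i, m⟩) 1
    fun m _ ↦ isHomogeneous_bottForm ⟨i, m⟩

theorem coeff_single_two_bottRelation {i : Fin k} (hi : n i = 1) (hdiag : ∀ m, a i i m = 1)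
    (j : Fin k) : coeff (.single j 2) (bottRelation a i) = if i = j then 1 else 0 := by
  have : Unique (Fin (n i)) := hi ▸ inferInstance
  rw [bottRelation, Fin.prod_univ_succ, Fintype.prod_unique, bottForm_zero,
    coeff_single_two_X_mul]
  split_ifs with hij
  · subst hij
    simp [coeff_sum, coeff_X, Finsupp.single_left_inj, hdiag]
  · rfl

theorem aeval_bottForm_mem_span_bottRelation
    {f : MvPolynomial (Σ i : Fin k, Fin (n i + 1)) (ZMod 2)} (hf : f ∈ bottIdeal k n a) :
    aeval (bottForm a) f ∈ Ideal.span (Set.range (bottRelation a)) := by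
  suffices bottIdeal k n a ≤ (Ideal.span (Set.range (bottRelation a))).comap (aeval (bottForm a))
    from this hf
  refine Ideal.span_le.2 ?_
  rintro _ (⟨i, rfl⟩ | ⟨i, m, rfl⟩)
  · exact Ideal.subset_span ⟨i, by simp [bottRelation]⟩
  · have h : aeval (bottForm a) (X ⟨i, m.succ⟩ +
        ∑ j ∈ Finset.univ.filter (· ≤ i), C (a j i m) * X ⟨j, 0⟩) = 0 := by
      simp [CharTwo.add_self_eq_zero, Finset.filter_ge_eq_Iic]
    rw [SetLike.mem_coe, Ideal.mem_comap, h]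
    exact Submodule.zero_mem _

/-- The quadratic normal form: substitute `bottForm`, keep the component of degree two, and
eliminate the squares `x_i²` with `n i = 1` by means of the quadratic relations. -/
noncomputable def bottNormalForm (a : Fin k → (i : Fin k) → Fin (n i) → ZMod 2) :
    MvPolynomial (Σ i : Fin k, Fin (n i + 1)) (ZMod 2) →ₗ[ZMod 2] MvPolynomial (Fin k) (ZMod 2) :=
  squareElimination {i | n i = 1} (bottRelation a) ∘ₗ homogeneousComponent 2 ∘ₗ
    (aeval (bottForm a)).toLinearMap

theorem bottNormalForm_eq_zero_of_mem (hn : ∀ i, 1 ≤ n i)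
    (hdiag : ∀ i, n i = 1 → ∀ m, a i i m = 1)
    {f : MvPolynomial (Σ i : Fin k, Fin (n i + 1)) (ZMod 2)} (hf : f ∈ bottIdeal k n a) :
    bottNormalForm a f = 0 := by
  have hspan := homogeneousComponent_mem_span_of_mem_ideal_span isHomogeneous_bottRelation
    (fun i ↦ Nat.succ_le_succ (hn i)) (aeval_bottForm_mem_span_bottRelation hf)
  refine squareElimination_eq_zero_of_mem_span (fun i hi j _ ↦ ?_) (by simpa using hspan)
  rw [Finset.mem_filter_univ] at hi
  exact coeff_single_two_bottRelation hi (hdiag i hi) j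

theorem bottNormalForm_quadraticFamily
    (x : {s // 2 ≤ n s} ⊕ {p : Fin k × Fin k // p.1 < p.2}) :
    bottNormalForm a (quadraticFamily (2 ≤ n ·) (fun i ↦ X ⟨i, 0⟩) x) =
      quadraticFamily (2 ≤ n ·) X x := by
  have helim : aeval (R := ZMod 2) (bottForm a)
      (quadraticFamily (2 ≤ n ·) (fun i ↦ X ⟨i, 0⟩) x) = quadraticFamily (2 ≤ n ·) X x := by
    simp only [map_quadraticFamily, aeval_X, bottForm_zero]
  rw [bottNormalForm, LinearMap.comp_apply, LinearMap.comp_apply, AlgHom.toLinearMap_apply, helim,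
    homogeneousComponent_eq_self (isHomogeneous_quadraticFamily_X x)]
  exact squareElimination_quadraticFamily_X (by simp +contextual) _ x

/-- The class of `x_{i,0}` in `R/I`. -/
noncomputable def bottClass (a : Fin k → (i : Fin k) → Fin (n i) → ZMod 2) (i : Fin k) :
    MvPolynomial (Σ i : Fin k, Fin (n i + 1)) (ZMod 2) ⧸ bottIdeal k n a :=
  Ideal.Quotient.mk (bottIdeal k n a) (X ⟨i, 0⟩)

theorem linearIndependent_quadraticFamily_bottClass (hn : ∀ i, 1 ≤ n i)
    (hdiag : ∀ i, n i = 1 → ∀ m, a i i m = 1) :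
    LinearIndependent (ZMod 2) (quadraticFamily (2 ≤ n ·) (bottClass a)) := by
  let π := Ideal.Quotient.mkₐ (ZMod 2) (bottIdeal k n a)
  have hker : LinearMap.ker π.toLinearMap ≤ LinearMap.ker (bottNormalForm a) := fun f hf ↦
    bottNormalForm_eq_zero_of_mem hn hdiag (Ideal.Quotient.eq_zero_iff_mem.1 hf)
  have hπ : π ∘ quadraticFamily (2 ≤ n ·) (fun i ↦ X ⟨i, 0⟩) =
      quadraticFamily (2 ≤ n ·) (bottClass a) :=
    funext (map_quadraticFamily π _ _)
  rw [← hπ]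
  refine linearIndependent_comp_of_ker_le hker ?_
  rw [show bottNormalForm a ∘ _ = quadraticFamily (2 ≤ n ·) X from
    funext bottNormalForm_quadraticFamily]
  exact linearIndependent_quadraticFamily_X _

theorem mk_X_succ (i : Fin k) (m : Fin (n i)) :
    Ideal.Quotient.mk (bottIdeal k n a) (X ⟨i, m.succ⟩) =
      ∑ j ∈ Finset.Iic i, a j i m • bottClass a j := by
  have h : Ideal.Quotient.mkₐ (ZMod 2) (bottIdeal k n a) (X ⟨i, m.succ⟩ -
      ∑ j ∈ Finset.Iic i, a j i m • X ⟨j, 0⟩) = 0 := by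
    refine Ideal.Quotient.eq_zero_iff_mem.2 (Ideal.subset_span (Or.inr ⟨i, m, ?_⟩))
    simp only [CharTwo.sub_eq_add, smul_eq_C_mul, Finset.filter_ge_eq_Iic]
  rw [map_sub, map_sum, sub_eq_zero] at h
  simp only [map_smul] at h
  exact h

theorem map_homogeneousSubmodule_one_eq_span_bottClass :
    (homogeneousSubmodule (Σ i : Fin k, Fin (n i + 1)) (ZMod 2) 1).map
        (Ideal.Quotient.mkₐ (ZMod 2) (bottIdeal k n a)).toLinearMap =
      Submodule.span (ZMod 2) (Set.range (bottClass a)) := by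
  rw [homogeneousSubmodule_one_eq_span_X, Submodule.map_span, ← Set.range_comp]
  refine le_antisymm (Submodule.span_le.2 ?_) (Submodule.span_mono ?_)
  · rintro _ ⟨⟨i, m⟩, rfl⟩
    cases m using Fin.cases with
    | zero => exact Submodule.subset_span ⟨i, rfl⟩
    | succ m =>
      have hsum : ∑ j ∈ Finset.Iic i, a j i m • bottClass a j ∈
          Submodule.span (ZMod 2) (Set.range (bottClass a)) :=
        Submodule.sum_mem _ fun j _ ↦ Submodule.smul_mem _ _ (Submodule.subset_span ⟨j, rfl⟩)
      rwa [← mk_X_succ] at hsum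
  · rintro _ ⟨i, rfl⟩
    exact ⟨⟨i, 0⟩, rfl⟩

theorem bottClass_sq {i : Fin k} (hi : n i = 1) (m : Fin (n i)) (hdiag : a i i m = 1) :
    bottClass a i ^ 2 = ∑ j ∈ Finset.Iio i, a j i m • (bottClass a j * bottClass a i) := by
  have : Subsingleton (Fin (n i)) := hi ▸ inferInstance
  have h : Ideal.Quotient.mk (bottIdeal k n a) (∏ m, X ⟨i, m⟩) = 0 :=
    Ideal.Quotient.eq_zero_iff_mem.2 (Ideal.subset_span (Or.inl ⟨i, rfl⟩))
  have hmul : bottClass a i *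
      (bottClass a i + ∑ j ∈ Finset.Iio i, a j i m • bottClass a j) = 0 := by
    rwa [Fin.prod_univ_succ, Fintype.prod_subsingleton _ m, map_mul, mk_X_succ,
      Finset.Iic_eq_cons_Iio, Finset.sum_cons, hdiag, one_smul] at h
  rw [mul_add, ← pow_two, add_eq_zero_iff_eq_neg, ZModModule.neg_eq_self] at hmul
  simpa only [mul_comm (bottClass a i), Finset.sum_mul, smul_mul_assoc] using hmul

theorem stmt_17_general (hn : ∀ i, 1 ≤ n i) (hdiag : ∀ i, n i = 1 → ∀ m, a i i m = 1) :
    LinearIndependent (ZMod 2) (quadraticFamily (2 ≤ n ·) (bottClass a)) ∧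
    Submodule.span (ZMod 2) (Set.range (quadraticFamily (2 ≤ n ·) (bottClass a))) =
      (homogeneousSubmodule (Σ i : Fin k, Fin (n i + 1)) (ZMod 2) 2).map
        (Ideal.Quotient.mkₐ (ZMod 2) (bottIdeal k n a)).toLinearMap := by
  refine ⟨linearIndependent_quadraticFamily_bottClass hn hdiag, ?_⟩
  rw [← homogeneousSubmodule_one_pow, Submodule.map_pow,
    map_homogeneousSubmodule_one_eq_span_bottClass]
  refine span_quadraticFamily fun i hi ↦ ?_
  have hni : n i = 1 := le_antisymm (Nat.lt_succ_iff.1 (not_le.1 hi)) (hn i)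
  rw [bottClass_sq hni ⟨0, hn i⟩ (hdiag i hni _)]
  refine Submodule.sum_mem _ fun j hj ↦ Submodule.smul_mem _ _ (Submodule.subset_span ?_)
  exact ⟨Sum.inr ⟨(j, i), Finset.mem_Iio.1 hj⟩, rfl⟩

end BottIdeal

/-- Suppose `A` is in unipotent upper triangular form, `n_1, …, n_l ≥ 2` and
`n_{l+1} = ⋯ = n_k = 1`.  Then the images in `R/I` of the monomials `x_{s,0}²` for `s ≤ l` and
`x_{r,0} x_{s,0}` for `r < s` form an `𝔽₂`-basis of the image in `R/I` of the subspace of `R` of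
homogeneous polynomials of degree `2`. -/
theorem stmt_17 (k l : ℕ) (hk : 1 ≤ k) (hl : l ≤ k) (n : Fin k → ℕ) (hn : ∀ i, 1 ≤ n i)
    (a : Fin k → (i : Fin k) → Fin (n i) → ZMod 2)
    (hUT : ∀ j i : Fin k, i < j → ∀ m : Fin (n i), a j i m = 0)
    (hdiag : ∀ i : Fin k, ∀ m : Fin (n i), a i i m = 1)
    (h2 : ∀ i : Fin k, (i : ℕ) < l → 2 ≤ n i)
    (h1 : ∀ i : Fin k, l ≤ (i : ℕ) → n i = 1) :
    LinearIndependent (ZMod 2)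
      (Sum.elim
        (fun s : {s : Fin k // (s : ℕ) < l} =>
          Ideal.Quotient.mk (bottIdeal k n a)
            (X (⟨s.1, 0⟩ : Σ i : Fin k, Fin (n i + 1)) ^ 2))
        (fun p : {p : Fin k × Fin k // p.1 < p.2} =>
          Ideal.Quotient.mk (bottIdeal k n a)
            (X (⟨p.1.1, 0⟩ : Σ i : Fin k, Fin (n i + 1))
              * X (⟨p.1.2, 0⟩ : Σ i : Fin k, Fin (n i + 1))))) ∧
    Submodule.span (ZMod 2)
      (Set.range
        (Sum.elim
          (fun s : {s : Fin k // (s : ℕ) < l} =>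
            Ideal.Quotient.mk (bottIdeal k n a)
              (X (⟨s.1, 0⟩ : Σ i : Fin k, Fin (n i + 1)) ^ 2))
          (fun p : {p : Fin k × Fin k // p.1 < p.2} =>
            Ideal.Quotient.mk (bottIdeal k n a)
              (X (⟨p.1.1, 0⟩ : Σ i : Fin k, Fin (n i + 1))
                * X (⟨p.1.2, 0⟩ : Σ i : Fin k, Fin (n i + 1))))))
      = Submodule.map (Ideal.Quotient.mkₐ (ZMod 2) (bottIdeal k n a)).toLinearMap
          (MvPolynomial.homogeneousSubmodule (Σ i : Fin k, Fin (n i + 1)) (ZMod 2) 2) := by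
  have hP : (fun i : Fin k ↦ (i : ℕ) < l) = (2 ≤ n ·) := by
    funext i
    grind
  have h := stmt_17_general hn fun i _ ↦ hdiag i
  rw [← hP] at h
  simpa only [quadraticFamily, bottClass, ← map_pow, ← map_mul] using h
end
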